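/- For every continuously differentiable function f : [−π, π] → ℝ with f(0) = 0 and every θ ∈ [−π, π], f(θ)² ≤ (π³/12)·sin(θ/2)²·∫_{−π}^{π} f′(ϑ)²/sin(ϑ/2)² dϑ (the weighted integral being allowed to be infinite, in which case the inequality is trivial). -/

import Mathlib

open MeasureTheory

lemma aux_sin_sq (θ : ℝ) (hθ : θ ∈ Set.Icc (-Real.pi) Real.pi) :
    |θ| ^ 3 / 12 ≤ Real.pi ^ 3 / 12 * Real.sin (θ / 2) ^ 2 := by
  have hpi := Real.pi_pos
  have h1 : |θ| ≤ Real.pi := abs_le.2 hθ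
  have h0 := abs_nonneg θ
  have h2 : 2 / Real.pi * |θ / 2| ≤ |Real.sin (θ / 2)| := by
    apply Real.mul_abs_le_abs_sin
    rw [abs_div, abs_two]; linarith
  rw [abs_div, abs_two] at h2
  have h3 : |θ| ≤ Real.pi * |Real.sin (θ / 2)| := by
    have := mul_le_mul_of_nonneg_left h2 hpi.le
    calc |θ| = Real.pi * (2 / Real.pi * (|θ| / 2)) := by field_simp
      _ ≤ _ := this
  have h4 : |θ| ^ 2 ≤ (Real.pi * |Real.sin (θ / 2)|) ^ 2 := by gcongr
  rw [mul_pow, sq_abs (Real.sin _)] at h4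
  have h5 : |θ| * |θ| ^ 2 ≤ Real.pi * (Real.pi ^ 2 * Real.sin (θ / 2) ^ 2) := by gcongr
  linarith

lemma aux_lint (θ : ℝ) :
    ∫⁻ x in Set.uIoc 0 θ, ENNReal.ofReal (Real.sin (x / 2) ^ 2)
      ≤ ENNReal.ofReal (|θ| ^ 3 / 12) := by
  calc _ ≤ ∫⁻ x in Set.uIoc 0 θ, ENNReal.ofReal (x ^ 2 / 4) := by
        apply lintegral_mono
        intro x
        apply ENNReal.ofReal_le_ofReal
        have h := sq_le_sq.2 (Real.abs_sin_le_abs (x := x / 2))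
        linarith [h]
    _ = ENNReal.ofReal (∫ x in Set.uIoc 0 θ, x ^ 2 / 4) := by
        rw [ofReal_integral_eq_lintegral_ofReal]
        · exact intervalIntegrable_iff.1 (Continuous.intervalIntegrable (by fun_prop) _ _)
        · exact Filter.Eventually.of_forall fun x => by positivity
    _ ≤ _ := by
        apply ENNReal.ofReal_le_ofReal
        refine (le_abs_self _).trans ?_
        rw [← intervalIntegral.abs_intervalIntegral_eq, intervalIntegral.integral_div,
          integral_pow, abs_div, abs_div]
        norm_num [abs_pow]
        linarith

theorem pointwise_weighted_bound (f f' : ℝ → ℝ)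
    (hf : ∀ θ ∈ Set.Icc (-Real.pi) Real.pi,
      HasDerivWithinAt f (f' θ) (Set.Icc (-Real.pi) Real.pi) θ)
    (hcont : ContinuousOn f' (Set.Icc (-Real.pi) Real.pi))
    (hf0 : f 0 = 0) :
    ∀ θ ∈ Set.Icc (-Real.pi) Real.pi,
      ENNReal.ofReal (f θ ^ 2)
        ≤ ENNReal.ofReal (Real.pi ^ 3 / 12 * Real.sin (θ / 2) ^ 2)
          * ∫⁻ ϑ in Set.Icc (-Real.pi) Real.pi,
              ENNReal.ofReal (f' ϑ ^ 2 / Real.sin (ϑ / 2) ^ 2) := by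
  intro θ hθ
  have hpi := Real.pi_pos
  have h0 : (0 : ℝ) ∈ Set.Icc (-Real.pi) Real.pi := ⟨by linarith, hpi.le⟩
  have hsub : Set.uIcc 0 θ ⊆ Set.Icc (-Real.pi) Real.pi := Set.uIcc_subset_Icc h0 hθ
  have hsub' : Set.uIoc 0 θ ⊆ Set.Icc (-Real.pi) Real.pi := Set.uIoc_subset_uIcc.trans hsub
  have hci : ContinuousOn f' (Set.uIcc 0 θ) := hcont.mono hsub
  have hftc : ∫ x in (0 : ℝ)..θ, f' x = f θ := by
    rw [intervalIntegral.integral_eq_sub_of_hasDeriv_right (f := f) (f' := f') _ _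
      hci.intervalIntegrable, hf0, sub_zero]
    · exact fun x hx => ((hf x (hsub hx)).continuousWithinAt).mono hsub
    · intro x hx
      have h1 : -Real.pi < x := lt_of_le_of_lt (le_min h0.1 hθ.1) hx.1
      have h2 : x < Real.pi := lt_of_lt_of_le hx.2 (max_le h0.2 hθ.2)
      exact ((hf x ⟨h1.le, h2.le⟩).hasDerivAt (Icc_mem_nhds h1 h2)).hasDerivWithinAt
  have hmeas : AEMeasurable f' (volume.restrict (Set.uIoc 0 θ)) :=
    (hcont.mono hsub').aemeasurable measurableSet_uIoc
  have hF : ‖f θ‖ₑ ≤ ∫⁻ x in Set.uIoc 0 θ, ‖f' x‖ₑ := by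
    rw [← hftc]
    have : ‖∫ x in (0 : ℝ)..θ, f' x‖ₑ = ‖∫ x in Set.uIoc 0 θ, f' x‖ₑ := by
      rw [← ofReal_norm, ← ofReal_norm, intervalIntegral.norm_intervalIntegral_eq]
    rw [this]
    exact enorm_integral_le_lintegral_enorm _
  have hsplit : ∫⁻ x in Set.uIoc 0 θ, ‖f' x‖ₑ
      = ∫⁻ x in Set.uIoc 0 θ, ((fun x => ‖Real.sin (x / 2)‖ₑ) *
          (fun x => ‖f' x / Real.sin (x / 2)‖ₑ)) x := by
    apply lintegral_congr_ae
    have hne : ∀ᵐ x ∂(volume.restrict (Set.uIoc 0 θ)), x ≠ 0 :=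
      ae_restrict_of_ae (Measure.ae_ne volume 0)
    filter_upwards [hne, ae_restrict_mem measurableSet_uIoc] with x hx hxm
    have hs : Real.sin (x / 2) ≠ 0 := by
      have hb := hsub' hxm
      rw [Ne, Real.sin_eq_zero_iff_of_lt_of_lt (by linarith [hb.1]) (by linarith [hb.2])]
      simpa using hx
    rw [Pi.mul_apply, ← enorm_mul, mul_div_cancel₀ _ hs]
  have hH := ENNReal.lintegral_mul_le_Lp_mul_Lq (volume.restrict (Set.uIoc 0 θ))
    (Real.HolderConjugate.two_two)
    (f := fun x => ‖Real.sin (x / 2)‖ₑ) (g := fun x => ‖f' x / Real.sin (x / 2)‖ₑ)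
    (by fun_prop) (by fun_prop)
  rw [← hsplit] at hH
  have hsq := hF.trans hH
  have key : ‖f θ‖ₑ ^ 2 ≤ (∫⁻ x in Set.uIoc 0 θ, ‖Real.sin (x / 2)‖ₑ ^ (2 : ℝ)) *
      ∫⁻ x in Set.uIoc 0 θ, ‖f' x / Real.sin (x / 2)‖ₑ ^ (2 : ℝ) := by
    have := pow_le_pow_left' hsq 2
    rw [mul_pow, ← ENNReal.rpow_natCast, ← ENNReal.rpow_natCast, ← ENNReal.rpow_natCast,
      ← ENNReal.rpow_mul, ← ENNReal.rpow_mul] at this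
    simpa using this
  have e : ∀ y : ℝ, ‖y‖ₑ ^ 2 = ENNReal.ofReal (y ^ 2) := by
    intro y
    rw [Real.enorm_eq_ofReal_abs, ← ENNReal.ofReal_pow (abs_nonneg _), sq_abs]
  simp only [ENNReal.rpow_two, e, div_pow] at key
  refine key.trans (mul_le_mul' ?_ (lintegral_mono_set hsub'))
  exact (aux_lint θ).trans (ENNReal.ofReal_le_ofReal (aux_sin_sq θ hθ))
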